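/- Let λ ≥ 1 and λ± = (1 ± √λ)². For every real z > λ₊, ∫_{λ₋}^{λ₊} (1/(z-x)) · √((λ₊-x)(x-λ₋))/(2πx) dx = (1 - λ + z - √((1-λ+z)² - 4z))/(2z). -/

import Mathlib

open Real

/-!
Partial fractions, `1 / ((z - x) * x) = (1 / x + 1 / (z - x)) / z`, reduce the integral to Cauchy
transforms of the semicircle density `√((β - x) * (x - α))`, evaluated at `z` and at `0`, points
outside `(α, β)`. An affine change of variables moves that density to `[-1, 1]`, where
`√(1 - y ^ 2) / (a - y)` has an explicit primitive, because
`(1 - y ^ 2) / (a - y) = a + y - (a ^ 2 - 1) / (a - y)`.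
-/

open Set intervalIntegral MeasureTheory

section UnitInterval

variable {a y : ℝ}

theorem sqrt_one_sub_sq_mul_sub_one_div_sub (ha : 1 ≤ a) (hy : y < a) :
    √(1 - ((a * y - 1) / (a - y)) ^ 2) = √(a ^ 2 - 1) * √(1 - y ^ 2) / (a - y) := by
  have hay : 0 < a - y := sub_pos.2 hy
  have hsq : 1 - ((a * y - 1) / (a - y)) ^ 2 = (a ^ 2 - 1) * (1 - y ^ 2) / (a - y) ^ 2 := by
    field_simp
    ring
  rw [hsq, sqrt_div' _ (sq_nonneg _), sqrt_sq hay.le, sqrt_mul (by nlinarith)]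

theorem hasDerivAt_arcsin_mul_sub_one_div_sub (ha : 1 < a) (hy : y ∈ Ioo (-1) 1) :
    HasDerivAt (fun t => arcsin ((a * t - 1) / (a - t)))
      (√(a ^ 2 - 1) / ((a - y) * √(1 - y ^ 2))) y := by
  obtain ⟨hy_gt, hy_lt⟩ := hy
  have hy_lt_a : y < a := hy_lt.trans ha
  have hay : 0 < a - y := sub_pos.2 hy_lt_a
  have ha_sq : 0 < a ^ 2 - 1 := by nlinarith
  have hy_sq : 0 < 1 - y ^ 2 := by nlinarith
  have h_mobius :
      HasDerivAt (fun t => (a * t - 1) / (a - t)) ((a ^ 2 - 1) / (a - y) ^ 2) y := by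
    refine ((((hasDerivAt_id y).const_mul a).sub_const 1).div
      ((hasDerivAt_id y).const_sub a) hay.ne').congr_deriv ?_
    simp only [id]
    ring
  have h_ne_neg_one : (a * y - 1) / (a - y) ≠ -1 := by
    rw [Ne, div_eq_iff hay.ne']
    nlinarith
  have h_ne_one : (a * y - 1) / (a - y) ≠ 1 := by
    rw [Ne, div_eq_iff hay.ne']
    nlinarith
  refine ((hasDerivAt_arcsin h_ne_neg_one h_ne_one).comp y h_mobius).congr_deriv ?_
  have ha_sqrt : √(a ^ 2 - 1) ≠ 0 := (sqrt_pos.2 ha_sq).ne'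
  have hy_sqrt : √(1 - y ^ 2) ≠ 0 := (sqrt_pos.2 hy_sq).ne'
  rw [sqrt_one_sub_sq_mul_sub_one_div_sub ha.le hy_lt_a]
  field_simp [ha_sqrt, hy_sqrt]
  exact (sq_sqrt ha_sq.le).symm

/-- A primitive of `y ↦ √(1 - y ^ 2) / (a - y)` on `[-1, 1]`, for `1 ≤ a`. For `a = 1` the last
`arcsin` is discontinuous at `y = 1` because of the convention `0 / 0 = 0`, but its coefficient
vanishes. -/
noncomputable def semicirclePrimitive (a y : ℝ) : ℝ :=
  a * arcsin y - √(1 - y ^ 2) - √(a ^ 2 - 1) * arcsin ((a * y - 1) / (a - y))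

theorem hasDerivAt_semicirclePrimitive (ha : 1 ≤ a) (hy : y ∈ Ioo (-1) 1) :
    HasDerivAt (semicirclePrimitive a) (√(1 - y ^ 2) / (a - y)) y := by
  have hay : 0 < a - y := by linarith [hy.2]
  have hy_sq : 0 < 1 - y ^ 2 := by nlinarith [hy.1, hy.2]
  have hy_sqrt : √(1 - y ^ 2) ≠ 0 := (sqrt_pos.2 hy_sq).ne'
  have h_arcsin : HasDerivAt (fun t => a * arcsin t) (a * (1 / √(1 - y ^ 2))) y :=
    (hasDerivAt_arcsin hy.1.ne' hy.2.ne).const_mul a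
  have h_sqrt : HasDerivAt (fun t => √(1 - t ^ 2)) (-y / √(1 - y ^ 2)) y := by
    refine (((hasDerivAt_pow 2 y).const_sub 1).sqrt hy_sq.ne').congr_deriv ?_
    field_simp
    norm_num
  have h_mobius : HasDerivAt (fun t => √(a ^ 2 - 1) * arcsin ((a * t - 1) / (a - t)))
      ((a ^ 2 - 1) / ((a - y) * √(1 - y ^ 2))) y := by
    rcases ha.eq_or_lt with rfl | ha
    · simpa using hasDerivAt_const y (0 : ℝ)
    · refine ((hasDerivAt_arcsin_mul_sub_one_div_sub ha hy).const_mul _).congr_deriv ?_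
      rw [← mul_div_assoc, mul_self_sqrt (by nlinarith)]
  refine ((h_arcsin.sub h_sqrt).sub h_mobius).congr_deriv ?_
  field_simp [hy_sqrt]
  rw [sq_sqrt hy_sq.le]
  ring

theorem continuousOn_semicirclePrimitive (ha : 1 ≤ a) :
    ContinuousOn (semicirclePrimitive a) (Icc (-1) 1) := by
  unfold semicirclePrimitive
  rcases ha.eq_or_lt with rfl | ha
  · simp only [one_pow, sub_self, sqrt_zero, zero_mul, sub_zero]
    fun_prop
  · have h_mobius : ContinuousOn (fun t => (a * t - 1) / (a - t)) (Icc (-1) 1) :=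
      ContinuousOn.div (by fun_prop) (by fun_prop) fun t ht => by linarith [ht.2]
    have h_arcsin : ContinuousOn (fun t => arcsin ((a * t - 1) / (a - t))) (Icc (-1) 1) :=
      continuous_arcsin.comp_continuousOn h_mobius
    fun_prop

theorem semicirclePrimitive_one (ha : 1 ≤ a) :
    semicirclePrimitive a 1 = π / 2 * (a - √(a ^ 2 - 1)) := by
  rcases ha.eq_or_lt with rfl | ha
  · simp [semicirclePrimitive]
  · have h_mobius : (a * 1 - 1) / (a - 1) = 1 := by
      rw [mul_one, div_self (by linarith)]
    simp only [semicirclePrimitive, h_mobius, arcsin_one, one_pow, sub_self, sqrt_zero]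
    ring

theorem semicirclePrimitive_neg_one (ha : 1 ≤ a) :
    semicirclePrimitive a (-1) = -(π / 2 * (a - √(a ^ 2 - 1))) := by
  have h_mobius : (a * -1 - 1) / (a - -1) = -1 := by
    rw [div_eq_iff (by linarith)]
    ring
  simp only [semicirclePrimitive, h_mobius, arcsin_neg_one, neg_one_sq, sub_self, sqrt_zero]
  ring

theorem intervalIntegrable_sqrt_one_sub_sq_div_sub (ha : 1 ≤ a) :
    IntervalIntegrable (fun y => √(1 - y ^ 2) / (a - y)) volume (-1) 1 := by
  have h_le : (-1 : ℝ) ≤ 1 := by norm_num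
  apply intervalIntegrable_deriv_of_nonneg (g := semicirclePrimitive a)
  · simpa only [uIcc_of_le h_le] using continuousOn_semicirclePrimitive ha
  · simpa only [min_eq_left h_le, max_eq_right h_le] using
      fun y hy => hasDerivAt_semicirclePrimitive ha hy
  · simp only [min_eq_left h_le, max_eq_right h_le]
    exact fun y hy => div_nonneg (sqrt_nonneg _) (by linarith [hy.2])

theorem integral_sqrt_one_sub_sq_div_sub (ha : 1 ≤ a) :
    ∫ y in (-1)..1, √(1 - y ^ 2) / (a - y) = π * (a - √(a ^ 2 - 1)) := by
  rw [integral_eq_sub_of_hasDerivAt_of_le (by norm_num) (continuousOn_semicirclePrimitive ha)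
    (fun y hy => hasDerivAt_semicirclePrimitive ha hy)
    (intervalIntegrable_sqrt_one_sub_sq_div_sub ha),
    semicirclePrimitive_one ha, semicirclePrimitive_neg_one ha]
  ring

end UnitInterval

section Interval

variable {α β w z : ℝ}

theorem integral_sqrt_sub_mul_sub_div_sub_left (hαβ : α ≤ β) (hz : β ≤ z) :
    ∫ x in α..β, √((β - x) * (x - α)) / (z - x)
      = π * (z - (α + β) / 2 - √((z - α) * (z - β))) := by
  rcases hαβ.eq_or_lt with rfl | hαβ
  · rw [integral_same, sqrt_mul_self (sub_nonneg.2 hz)]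
    ring
  obtain ⟨c, hc⟩ : ∃ c, c = (β - α) / 2 := ⟨_, rfl⟩
  obtain ⟨m, hm⟩ : ∃ m, m = (α + β) / 2 := ⟨_, rfl⟩
  have hc_pos : 0 < c := by linarith
  obtain rfl : α = m - c := by linarith
  obtain rfl : β = m + c := by linarith
  obtain ⟨a, rfl⟩ : ∃ a, z = m + c * a := ⟨(z - m) / c, by field_simp; ring⟩
  have ha : 1 ≤ a := le_of_mul_le_mul_left (by linarith) hc_pos
  have sqrt_scale (t : ℝ) : √(c ^ 2 * t) = c * √t := by
    rw [sqrt_mul (sq_nonneg c), sqrt_sq hc_pos.le]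
  calc ∫ x in (m - c)..(m + c), √((m + c - x) * (x - (m - c))) / (m + c * a - x)
      = c * ∫ y in (-1)..1, √((m + c - (c * y + m)) * (c * y + m - (m - c)))
          / (m + c * a - (c * y + m)) := by
        rw [mul_integral_comp_mul_add
          (f := fun x => √((m + c - x) * (x - (m - c))) / (m + c * a - x))]
        congr 1 <;> ring
    _ = c * ∫ y in (-1)..1, √(1 - y ^ 2) / (a - y) := by
        congr 2 with y
        rw [show (m + c - (c * y + m)) * (c * y + m - (m - c)) = c ^ 2 * (1 - y ^ 2) by ring,
          show m + c * a - (c * y + m) = c * (a - y) by ring, sqrt_scale,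
          mul_div_mul_left _ _ hc_pos.ne']
    _ = π * (m + c * a - (m - c + (m + c)) / 2
          - √((m + c * a - (m - c)) * (m + c * a - (m + c)))) := by
        rw [integral_sqrt_one_sub_sq_div_sub ha,
          show (m + c * a - (m - c)) * (m + c * a - (m + c)) = c ^ 2 * (a ^ 2 - 1) by ring,
          sqrt_scale]
        ring

theorem integral_sqrt_sub_mul_sub_div_sub_right (hαβ : α ≤ β) (hw : w ≤ α) :
    ∫ x in α..β, √((β - x) * (x - α)) / (x - w)
      = π * ((α + β) / 2 - w - √((α - w) * (β - w))) := by
  calc ∫ x in α..β, √((β - x) * (x - α)) / (x - w)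
      = ∫ x in α..β, √((β - x) * (x - α)) / (α + β - w - x) := by
        have h_reflect := integral_comp_sub_left (a := α) (b := β)
          (fun x => √((β - x) * (x - α)) / (α + β - w - x)) (α + β)
        rw [add_sub_cancel_right, add_sub_cancel_left] at h_reflect
        rw [← h_reflect]
        congr 1 with x
        ring_nf
    _ = π * ((α + β) / 2 - w - √((α - w) * (β - w))) := by
        rw [integral_sqrt_sub_mul_sub_div_sub_left hαβ (by linarith)]
        ring_nf

theorem intervalIntegrable_sqrt_sub_mul_sub_div_sub_left (hαβ : α ≤ β) (hz : β ≤ z) :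
    IntervalIntegrable (fun x => √((β - x) * (x - α)) / (z - x)) volume α β := by
  rcases hαβ.eq_or_lt with rfl | hαβ
  · exact .refl
  -- The integral of a non-integrable function is `0` by convention.
  apply intervalIntegrable_of_integral_ne_zero
  rw [integral_sqrt_sub_mul_sub_div_sub_left hαβ.le hz]
  have h_amgm : √((z - α) * (z - β)) < z - (α + β) / 2 :=
    (sqrt_lt' (by linarith)).2 (by nlinarith)
  exact (mul_pos pi_pos (sub_pos.2 h_amgm)).ne'

theorem intervalIntegrable_sqrt_sub_mul_sub_div_sub_right (hαβ : α ≤ β) (hw : w ≤ α) :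
    IntervalIntegrable (fun x => √((β - x) * (x - α)) / (x - w)) volume α β := by
  rcases hαβ.eq_or_lt with rfl | hαβ
  · exact .refl
  apply intervalIntegrable_of_integral_ne_zero
  rw [integral_sqrt_sub_mul_sub_div_sub_right hαβ.le hw]
  have h_amgm : √((α - w) * (β - w)) < (α + β) / 2 - w :=
    (sqrt_lt' (by linarith)).2 (by nlinarith)
  exact (mul_pos pi_pos (sub_pos.2 h_amgm)).ne'

theorem integral_sqrt_sub_mul_sub_div_sub_mul_sub (hαβ : α ≤ β) (hw : w ≤ α) (hz : β ≤ z) :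
    ∫ x in α..β, √((β - x) * (x - α)) / ((z - x) * (x - w))
      = π / (z - w) * (z - w - √((α - w) * (β - w)) - √((z - α) * (z - β))) := by
  have h_partial_fractions : EqOn (fun x => √((β - x) * (x - α)) / ((z - x) * (x - w)))
      (fun x => (z - w)⁻¹ *
        (√((β - x) * (x - α)) / (x - w) + √((β - x) * (x - α)) / (z - x))) (Ioo α β) := by
    intro x hx
    have hxw : x - w ≠ 0 := by linarith [hx.1]
    have hzx : z - x ≠ 0 := by linarith [hx.2]
    have hzw : z - w ≠ 0 := by linarith [hx.1, hx.2]
    field_simp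
    ring
  rw [integral_congr_Ioo_of_le hαβ h_partial_fractions, intervalIntegral.integral_const_mul,
    intervalIntegral.integral_add (intervalIntegrable_sqrt_sub_mul_sub_div_sub_right hαβ hw)
      (intervalIntegrable_sqrt_sub_mul_sub_div_sub_left hαβ hz),
    integral_sqrt_sub_mul_sub_div_sub_right hαβ hw, integral_sqrt_sub_mul_sub_div_sub_left hαβ hz]
  ring

end Interval

theorem marchenko_pastur_cauchy_transform_general (l : ℝ) (hl : 0 ≤ l) (lm lp : ℝ)
    (hlm : lm = (1 - √l) ^ 2) (hlp : lp = (1 + √l) ^ 2) (z : ℝ) (hz : lp ≤ z) :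
    ∫ x in lm..lp, (1 / (z - x)) * (√((lp - x) * (x - lm)) / (2 * π * x))
      = (z - |1 - l| - √((1 - l + z) ^ 2 - 4 * z)) / (2 * z) := by
  have hl_sq : √l ^ 2 = l := sq_sqrt hl
  have h_nonneg : 0 ≤ lm := hlm ▸ sq_nonneg _
  have h_le : lm ≤ lp := by nlinarith [sqrt_nonneg l]
  have h_prod : (lm - 0) * (lp - 0) = (1 - l) ^ 2 := by
    rw [hlm, hlp, ← hl_sq, sqrt_sq (sqrt_nonneg l)]
    ring
  have h_disc : (z - lm) * (z - lp) = (1 - l + z) ^ 2 - 4 * z := by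
    linear_combination h_prod - z * hlm - z * hlp - 2 * z * hl_sq
  calc ∫ x in lm..lp, (1 / (z - x)) * (√((lp - x) * (x - lm)) / (2 * π * x))
      = ∫ x in lm..lp, (2 * π)⁻¹ * (√((lp - x) * (x - lm)) / ((z - x) * (x - 0))) := by
        congr 1 with x
        rw [sub_zero, one_div_mul_eq_div, div_div, inv_mul_eq_div, div_div]
        congr 1
        ring
    _ = (z - |1 - l| - √((1 - l + z) ^ 2 - 4 * z)) / (2 * z) := by
        rw [intervalIntegral.integral_const_mul,
          integral_sqrt_sub_mul_sub_div_sub_mul_sub h_le h_nonneg hz, h_prod, h_disc,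
          sqrt_sq_eq_abs]
        field_simp
        ring

/-- The Cauchy transform of the Marchenko–Pastur law. -/
theorem marchenko_pastur_cauchy_transform (l : ℝ) (hl : 1 ≤ l) (lm lp : ℝ)
    (hlm : lm = (1 - Real.sqrt l) ^ 2) (hlp : lp = (1 + Real.sqrt l) ^ 2)
    (z : ℝ) (hz : lp < z) :
    ∫ x in lm..lp, (1 / (z - x)) * (Real.sqrt ((lp - x) * (x - lm)) / (2 * π * x))
      = (1 - l + z - Real.sqrt ((1 - l + z) ^ 2 - 4 * z)) / (2 * z) := by
  rw [marchenko_pastur_cauchy_transform_general l (by linarith) lm lp hlm hlp z hz.le,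
    abs_of_nonpos (by linarith)]
  ring
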